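/- arXiv:2405.20129 — 4 statements merged into one kernel-verified Lean document; each statement's English description precedes it below -/
import Mathlib

section
/- Let n ≥ 4 be an even integer and let σ ≥ 0. Let R be an algebraic curvature tensor on ℝ^n whose isotropic curvature is uniformly bounded below by σ, i.e. for every orthonormal 4-tuple of vectors v₁, v₂, v₃, v₄ in EuclideanSpace ℝ (Fin n) one has R(v₁,v₃,v₁,v₃) + R(v₁,v₄,v₁,v₄) + R(v₂,v₃,v₂,v₃) + R(v₂,v₄,v₂,v₄) − 2·R(v₁,v₂,v₃,v₄) ≥ σ (where R(x,y,z,w) denotes the multilinear extension of R). Then for every complex two-form ω on ℝ^n, the Weitzenböck curvature term satisfies Re ⟨ℛω, ω⟩ ≥ ((n−2)/2) · σ · |ω|². -/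
/-!
As `R` is real, `Re ⟨ℛω, ω⟩` is the sum of the values of the quadratic form `⟨ℛa, a⟩` at the real
and imaginary parts of `ω`, so it suffices to bound that form at a real two-form `a`. By the Bianchi
identity in the form `R i j k l = R i k j l - R j k i l`, antisymmetrized against `a i j`,
`⟨ℛa, a⟩ = 2 Σ Ric (a eⱼ, a eⱼ) - Σ R(a eⱼ, eⱼ, a eₗ, eₗ)`, which does not depend on the orthonormal
basis. In a basis `e₁, …, eₘ, f₁, …, fₘ` with `a eₚ = μₚ fₚ` and `a fₚ = -μₚ eₚ` it becomes the sum
over all `p, q` of the isotropic curvatures of `(eₚ, fₚ, e_q, f_q)` and `(eₚ, fₚ, f_q, e_q)` with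
weights `(μₚ + μ_q)² / 2` and `(μₚ - μ_q)² / 2`. The diagonal terms vanish, since `(eₚ, fₚ, eₚ, fₚ)`
has isotropic curvature `0`; each of the others is at least `(μₚ² + μ_q²) σ`, and these add up to
`2 (m - 1) σ Σ μₚ² = (m - 1) σ |a|²`.
-/

open Finset

/-- The multilinear extension of an algebraic curvature tensor to `EuclideanSpace ℝ (Fin n)`. -/
noncomputable def curvExt {n : ℕ} (R : Fin n → Fin n → Fin n → Fin n → ℝ)
    (x y z w : EuclideanSpace ℝ (Fin n)) : ℝ :=
  ∑ i, ∑ j, ∑ k, ∑ l, R i j k l * x i * y j * z k * w l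

/-- The Ricci contraction of an algebraic curvature tensor. -/
noncomputable def ricci {n : ℕ} (R : Fin n → Fin n → Fin n → Fin n → ℝ) (i k : Fin n) : ℝ :=
  ∑ j, R i j k j

/-- The Weitzenböck curvature operator `ℛ` on complex two-forms, in an orthonormal frame:
`(ℛω) i j = Σ_k Ric i k · ω k j + Σ_k ω i k · Ric k j − 2 Σ_{k,l} R i k j l · ω k l`. -/
noncomputable def weitzenbockOp {n : ℕ} (R : Fin n → Fin n → Fin n → Fin n → ℝ)
    (ω : Fin n → Fin n → ℂ) (i j : Fin n) : ℂ :=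
  (∑ k, (ricci R i k : ℂ) * ω k j) + (∑ k, ω i k * (ricci R k j : ℂ)) -
    2 * ∑ k, ∑ l, (R i k j l : ℂ) * ω k l

open Module InnerProductSpace
open scoped RealInnerProductSpace

section SkewAdjoint

variable {E : Type*} [NormedAddCommGroup E] [InnerProductSpace ℝ E] {A : E →ₗ[ℝ] E}

theorem inner_map_self_eq_zero_of_skew (hA : ∀ x y, ⟪A x, y⟫ = -⟪x, A y⟫) (x : E) :
    ⟪x, A x⟫ = 0 := by
  linarith [hA x x, real_inner_comm x (A x)]

theorem orthogonal_mem_invtSubmodule_of_skew (hA : ∀ x y, ⟪A x, y⟫ = -⟪x, A y⟫)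
    {P : Submodule ℝ E} (hP : P ∈ End.invtSubmodule A) : Pᗮ ∈ End.invtSubmodule A := by
  intro x hx y hy
  rw [← neg_eq_zero, ← hA]
  exact hx (A y) (hP hy)

/-- The normal form of a skew-adjoint operator on an even-dimensional space. The basis vectors
`eₚ = b (inl p)` and `fₚ = b (inr p)` span an invariant plane, on which `A` is the rotation
`eₚ ↦ fₚ`, `fₚ ↦ -eₚ` scaled by `μ p`, which may have any sign. -/
def IsSkewNormalForm {ι : Type*} [Fintype ι] (A : E →ₗ[ℝ] E) (b : OrthonormalBasis (ι ⊕ ι) ℝ E)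
    (μ : ι → ℝ) : Prop :=
  ∀ p, A (b (.inl p)) = μ p • b (.inr p) ∧ A (b (.inr p)) = -μ p • b (.inl p)

theorem IsSkewNormalForm.sum_norm_sq {ι : Type*} [Fintype ι] {b : OrthonormalBasis (ι ⊕ ι) ℝ E}
    {μ : ι → ℝ} (hb : IsSkewNormalForm A b μ) : ∑ p, ‖A (b p)‖ ^ 2 = 2 * ∑ p, μ p ^ 2 := by
  simp [Fintype.sum_sum_type, (hb _).1, (hb _).2, norm_smul, two_mul]

variable [FiniteDimensional ℝ E]

theorem exists_invariant_plane_of_skew (hA : ∀ x y, ⟪A x, y⟫ = -⟪x, A y⟫)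
    (hE : 2 ≤ finrank ℝ E) : ∃ P ∈ End.invtSubmodule A, finrank ℝ P = 2 := by
  suffices ∃ u v, LinearIndependent ℝ ![u, v] ∧ A u ∈ ℝ ∙ v ∧ A v ∈ ℝ ∙ u by
    obtain ⟨u, v, huv, hu, hv⟩ := this
    refine ⟨(ℝ ∙ u) ⊔ (ℝ ∙ v), ?_, ?_⟩
    · rw [End.mem_invtSubmodule, sup_le_iff, Submodule.span_singleton_le_iff_mem,
        Submodule.span_singleton_le_iff_mem]
      exact ⟨Submodule.mem_sup_right hu, Submodule.mem_sup_left hv⟩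
    · rw [← Submodule.span_insert, ← Matrix.range_cons_cons_empty, finrank_span_eq_card huv,
        Fintype.card_fin]
  have hsymm : (A ∘ₗ A).IsSymmetric := fun x y => by simp [hA]
  let b := hsymm.eigenvectorBasis rfl
  by_cases hker : ∀ i, A (b i) = 0
  · have hzero : A = 0 := b.toBasis.ext (by simpa using hker)
    have : Nontrivial E := nontrivial_of_finrank_pos (R := ℝ) (by omega)
    obtain ⟨u, hu⟩ := exists_ne (0 : E)
    obtain ⟨v, huv⟩ := exists_linearIndependent_pair_of_one_lt_finrank hE hu
    exact ⟨u, v, huv, by simp [hzero], by simp [hzero]⟩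
  · -- An eigenvector `u` of the symmetric operator `A ∘ A` spans an invariant plane with `A u`.
    obtain ⟨i, hi⟩ := not_forall.1 hker
    have hperp : Pairwise fun j k => ⟪![b i, A (b i)] j, ![b i, A (b i)] k⟫ = 0 := by
      simp [pairwise_fin_succ_iff_of_isSymm, inner_map_self_eq_zero_of_skew hA]
    refine ⟨b i, A (b i), linearIndependent_of_ne_zero_of_inner_eq_zero ?_ hperp,
      Submodule.mem_span_singleton_self _,
      Submodule.mem_span_singleton.2 ⟨_, (hsymm.apply_eigenvectorBasis rfl i).symm⟩⟩
    simp [Fin.forall_fin_two, hi, b.orthonormal.ne_zero i]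

theorem exists_isSkewNormalForm_of_finrank_eq_two (hA : ∀ x y, ⟪A x, y⟫ = -⟪x, A y⟫)
    (hE : finrank ℝ E = 2) :
    ∃ (b : OrthonormalBasis (Unit ⊕ Unit) ℝ E) (μ : Unit → ℝ), IsSkewNormalForm A b μ := by
  let b := (stdOrthonormalBasis ℝ E).reindex
    (Fintype.equivOfCardEq (β := Unit ⊕ Unit) (by simp [hE]))
  refine ⟨b, fun p => ⟪b (.inr p), A (b (.inl p))⟫, fun p => ⟨?_, ?_⟩⟩
  · rw [← b.sum_repr' (A (b (.inl p)))]
    simp [inner_map_self_eq_zero_of_skew hA]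
  · have hskew : ⟪b (.inl p), A (b (.inr p))⟫ = -⟪b (.inr p), A (b (.inl p))⟫ := by
      rw [real_inner_comm, ← neg_eq_iff_eq_neg, hA, neg_neg]
    rw [← b.sum_repr' (A (b (.inr p)))]
    simp [inner_map_self_eq_zero_of_skew hA, hskew]

theorem IsSkewNormalForm.prod {ι κ : Type*} [Fintype ι] [Fintype κ] {P : Submodule ℝ E}
    {b : OrthonormalBasis (ι ⊕ ι) ℝ P} {c : OrthonormalBasis (κ ⊕ κ) ℝ Pᗮ} {μ : ι → ℝ} {ν : κ → ℝ}
    {hP : ∀ x ∈ P, A x ∈ P} {hQ : ∀ x ∈ Pᗮ, A x ∈ Pᗮ} (hb : IsSkewNormalForm (A.restrict hP) b μ)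
    (hc : IsSkewNormalForm (A.restrict hQ) c ν) :
    IsSkewNormalForm A (((b.prod c).map P.orthogonalDecomposition.symm).reindex
      (Equiv.sumSumSumComm ι ι κ κ)) (Sum.elim μ ν) := by
  simp only [IsSkewNormalForm, Subtype.ext_iff] at hb hc
  rintro (p | p)
  · simpa using hb p
  · simpa using hc p

theorem exists_isSkewNormalForm (hA : ∀ x y, ⟪A x, y⟫ = -⟪x, A y⟫) (hE : Even (finrank ℝ E)) :
    ∃ (ι : Type) (_ : Fintype ι) (b : OrthonormalBasis (ι ⊕ ι) ℝ E) (μ : ι → ℝ),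
      IsSkewNormalForm A b μ := by
  induction hn : finrank ℝ E using Nat.strong_induction_on generalizing E with
  | _ n ih =>
  subst hn
  rcases Nat.eq_zero_or_pos (finrank ℝ E) with hzero | hpos
  · exact ⟨Empty, inferInstance, (stdOrthonormalBasis ℝ E).reindex
      (Fintype.equivOfCardEq (by simp [hzero])), Empty.elim, Empty.rec⟩
  obtain ⟨P, hP, hP2⟩ := exists_invariant_plane_of_skew hA (by grind)
  have hQ := orthogonal_mem_invtSubmodule_of_skew hA hP
  have hsum := P.finrank_add_finrank_orthogonal
  obtain ⟨b, μ, hb⟩ := exists_isSkewNormalForm_of_finrank_eq_two (A := A.restrict hP)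
    (fun x y => hA x y) hP2
  obtain ⟨ι, _, c, ν, hc⟩ := ih (finrank ℝ Pᗮ) (by omega) (A := A.restrict hQ)
    (fun x y => hA x y) (by grind) rfl
  exact ⟨Unit ⊕ ι, inferInstance, _, _, hb.prod hc⟩

end SkewAdjoint

section OrthonormalTrace

variable {E F ι κ : Type*} [NormedAddCommGroup E] [InnerProductSpace ℝ E] [FiniteDimensional ℝ E]
  [AddCommMonoid F] [Module ℝ F] [Fintype ι] [Fintype κ]

theorem sum_bilin_orthonormalBasis_eq (B : E →ₗ[ℝ] E →ₗ[ℝ] F) (b : OrthonormalBasis ι ℝ E)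
    (c : OrthonormalBasis κ ℝ E) : ∑ p, B (b p) (b p) = ∑ q, B (c q) (c q) := by
  simpa using congrArg (TensorProduct.lift B)
    ((canonicalCovariantTensor_eq_sum E b).symm.trans (canonicalCovariantTensor_eq_sum E c))

theorem sum_norm_sq_map_orthonormalBasis_eq (A : E →ₗ[ℝ] E) (b : OrthonormalBasis ι ℝ E)
    (c : OrthonormalBasis κ ℝ E) : ∑ p, ‖A (b p)‖ ^ 2 = ∑ q, ‖A (c q)‖ ^ 2 := by
  simpa using sum_bilin_orthonormalBasis_eq ((innerₗ E).compl₁₂ A A) b c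

end OrthonormalTrace

theorem sum_sum_ite_eq_zero_add {ι R : Type*} [Fintype ι] [DecidableEq ι] [CommRing R] (g : ι → R) :
    ∑ p, ∑ q, (if p = q then 0 else g p + g q) = 2 * (Fintype.card ι - 1) * ∑ p, g p := by
  have hsplit (p q : ι) : (if p = q then 0 else g p + g q) =
      g p + g q - if p = q then 2 * g p else 0 := by
    split_ifs with hpq
    · rw [hpq]
      ring
    · ring
  simp only [hsplit, sum_sub_distrib, sum_add_distrib, sum_ite_eq, mem_univ, if_true, sum_const,
    card_univ, nsmul_eq_mul, ← mul_sum]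
  ring

section IsotropicCurvature

variable {E : Type*} [AddCommGroup E] [Module ℝ E]

/-- A quadrilinear real form on `E`, such as the curvature tensor `(x, y, z, w) ↦ R(x, y, z, w)`. -/
abbrev QuadrilinearForm (E : Type*) [AddCommGroup E] [Module ℝ E] : Type _ :=
  E →ₗ[ℝ] E →ₗ[ℝ] E →ₗ[ℝ] E →ₗ[ℝ] ℝ

/-- The isotropic curvature of a curvature tensor `T` on a four-frame, which is the value
`T(ζ, η, conj ζ, conj η)` of its complexification at `ζ = v₁ + √-1 v₂` and `η = v₃ + √-1 v₄`. -/
def isotropicCurvature (T : QuadrilinearForm E) (v₁ v₂ v₃ v₄ : E) : ℝ :=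
  T v₁ v₃ v₁ v₃ + T v₁ v₄ v₁ v₄ + T v₂ v₃ v₂ v₃ + T v₂ v₄ v₂ v₄ - 2 * T v₁ v₂ v₃ v₄

theorem isotropicCurvature_pair_self {T : QuadrilinearForm E}
    (hleft : ∀ x y z w, T x y z w = -T y x z w) (hright : ∀ x y z w, T x y z w = -T x y w z)
    (x y : E) : isotropicCurvature T x y x y = 0 := by
  have hself : ∀ x, T x x x x = 0 := fun x => self_eq_neg.1 (hleft x x x x)
  have hswap : T y x y x = T x y x y := by rw [hleft, hright, neg_neg]
  rw [isotropicCurvature, hself, hself, hswap]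
  ring

end IsotropicCurvature

section WeitzenbockForm

variable {E ι κ : Type*} [NormedAddCommGroup E] [InnerProductSpace ℝ E] [Fintype ι] [Fintype κ]

/-- The value `⟨ℛa, a⟩` of the Weitzenböck curvature term of a curvature tensor `T` at the two-form
`a` with skew-adjoint operator `A`, namely `2 ∑ₚ Ric (A eₚ, A eₚ) - ∑ₚ ∑_q T(A eₚ, eₚ, A e_q, e_q)`
in the orthonormal basis `b = (eₚ)`. The Bianchi identity has already been used in the last sum. -/
noncomputable def weitzenbockForm (T : QuadrilinearForm E) (A : E →ₗ[ℝ] E)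
    (b : OrthonormalBasis ι ℝ E) : ℝ :=
  2 * ∑ p, ∑ q, T (A (b p)) (b q) (A (b p)) (b q) - ∑ p, ∑ q, T (A (b p)) (b p) (A (b q)) (b q)

theorem weitzenbockForm_eq_sum_isotropicCurvature {T : QuadrilinearForm E} {A : E →ₗ[ℝ] E}
    (hleft : ∀ x y z w, T x y z w = -T y x z w) (hright : ∀ x y z w, T x y z w = -T x y w z)
    {b : OrthonormalBasis (ι ⊕ ι) ℝ E} {μ : ι → ℝ} (hb : IsSkewNormalForm A b μ) :
    weitzenbockForm T A b = ∑ p, ∑ q,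
      ((μ p + μ q) ^ 2 / 2 *
          isotropicCurvature T (b (.inl p)) (b (.inr p)) (b (.inl q)) (b (.inr q)) +
        (μ p - μ q) ^ 2 / 2 *
          isotropicCurvature T (b (.inl p)) (b (.inr p)) (b (.inr q)) (b (.inl q))) := by
  set e : ι → E := fun p => b (.inl p)
  set f : ι → E := fun p => b (.inr p)
  let K (p q : ι) : ℝ := T (e p) (e q) (e p) (e q) + T (e p) (f q) (e p) (f q) +
    T (f p) (e q) (f p) (e q) + T (f p) (f q) (f p) (f q)
  have hK_symm (p q : ι) : K p q = K q p := by
    have hswap (x y : E) : T x y x y = T y x y x := by rw [hleft, hright, neg_neg]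
    simp only [K]
    rw [hswap (e p), hswap (e p), hswap (f p), hswap (f p)]
    ring
  have hRicci : ∑ p, ∑ q, T (A (b p)) (b q) (A (b p)) (b q) = ∑ p, ∑ q, μ p ^ 2 * K p q := by
    simp only [Fintype.sum_sum_type, ← sum_add_distrib, (hb _).1, (hb _).2, map_smul,
      LinearMap.smul_apply, smul_eq_mul]
    exact sum_congr rfl fun p _ => sum_congr rfl fun q _ => by ring
  have hRicci_symm : 2 * ∑ p, ∑ q, μ p ^ 2 * K p q = ∑ p, ∑ q, (μ p ^ 2 + μ q ^ 2) * K p q := by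
    simp only [add_mul, sum_add_distrib, two_mul]
    rw [sum_comm (f := fun p q => μ q ^ 2 * K p q)]
    exact congrArg _ (sum_congr rfl fun p _ => sum_congr rfl fun q _ => by rw [hK_symm])
  have hcurv : ∑ p, ∑ q, T (A (b p)) (b p) (A (b q)) (b q) =
      ∑ p, ∑ q, 4 * (μ p * μ q * T (e p) (f p) (e q) (f q)) := by
    simp only [Fintype.sum_sum_type, ← sum_add_distrib, (hb _).1, (hb _).2, map_smul,
      LinearMap.smul_apply, smul_eq_mul]
    refine sum_congr rfl fun p _ => sum_congr rfl fun q _ => ?_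
    rw [hleft (f p) (e p), hleft (f p) (e p), hright (e p) (f p) (f q) (e q)]
    ring
  rw [weitzenbockForm, hRicci, hRicci_symm, hcurv]
  simp only [← sum_sub_distrib, isotropicCurvature]
  refine sum_congr rfl fun p _ => sum_congr rfl fun q _ => ?_
  rw [hright (e p) (f p) (f q) (e q)]
  ring

variable [FiniteDimensional ℝ E]

theorem weitzenbockForm_orthonormalBasis_eq (T : QuadrilinearForm E) (A : E →ₗ[ℝ] E)
    (b : OrthonormalBasis ι ℝ E) (c : OrthonormalBasis κ ℝ E) :
    weitzenbockForm T A b = weitzenbockForm T A c := by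
  have hinner (x : E) : ∑ q, T x (b q) x (b q) = ∑ q, T x (c q) x (c q) :=
    sum_bilin_orthonormalBasis_eq ((T x).flip x) b c
  have houter (y : E) : ∑ p, T (A (b p)) y (A (b p)) y = ∑ p, T (A (c p)) y (A (c p)) y := by
    simpa using LinearMap.congr_fun (sum_bilin_orthonormalBasis_eq ((T.flip y).compl₁₂ A A) b c) y
  have hfirst (y z : E) : ∑ p, T (A (b p)) (b p) y z = ∑ p, T (A (c p)) (c p) y z := by
    simpa using LinearMap.congr_fun₂ (sum_bilin_orthonormalBasis_eq (T ∘ₗ A) b c) y z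
  have hsecond (S : E →ₗ[ℝ] E →ₗ[ℝ] ℝ) : ∑ q, S (A (b q)) (b q) = ∑ q, S (A (c q)) (c q) :=
    sum_bilin_orthonormalBasis_eq (S ∘ₗ A) b c
  have hRicci : ∑ p, ∑ q, T (A (b p)) (b q) (A (b p)) (b q) =
      ∑ p, ∑ q, T (A (c p)) (c q) (A (c p)) (c q) := by
    rw [sum_congr rfl fun p _ => hinner (A (b p)), sum_comm,
      sum_congr rfl fun q _ => houter (c q), sum_comm]
  have hcurv : ∑ p, ∑ q, T (A (b p)) (b p) (A (b q)) (b q) =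
      ∑ p, ∑ q, T (A (c p)) (c p) (A (c q)) (c q) := by
    rw [sum_congr rfl fun p _ => hsecond (T (A (b p)) (b p)), sum_comm,
      sum_congr rfl fun q _ => hfirst (A (c q)) (c q), sum_comm]
  rw [weitzenbockForm, hRicci, hcurv, weitzenbockForm]

theorem weitzenbockForm_lower_bound_of_isotropic {T : QuadrilinearForm E} {A : E →ₗ[ℝ] E} {σ : ℝ}
    (hleft : ∀ x y z w, T x y z w = -T y x z w) (hright : ∀ x y z w, T x y z w = -T x y w z)
    (hiso : ∀ v₁ v₂ v₃ v₄, Orthonormal ℝ ![v₁, v₂, v₃, v₄] → σ ≤ isotropicCurvature T v₁ v₂ v₃ v₄)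
    (hA : ∀ x y, ⟪A x, y⟫ = -⟪x, A y⟫) (hE : Even (finrank ℝ E)) (c : OrthonormalBasis κ ℝ E) :
    ((finrank ℝ E : ℝ) - 2) / 2 * σ * ∑ q, ‖A (c q)‖ ^ 2 ≤ weitzenbockForm T A c := by
  obtain ⟨ι, _, b, μ, hb⟩ := exists_isSkewNormalForm hA hE
  have hcard : (finrank ℝ E : ℝ) = 2 * Fintype.card ι := by
    simp [finrank_eq_card_basis b.toBasis, two_mul]
  rw [sum_norm_sq_map_orthonormalBasis_eq A c b, hb.sum_norm_sq,
    weitzenbockForm_orthonormalBasis_eq T A c b,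
    weitzenbockForm_eq_sum_isotropicCurvature hleft hright hb]
  classical
  calc ((finrank ℝ E : ℝ) - 2) / 2 * σ * (2 * ∑ p, μ p ^ 2)
    _ = ∑ p, ∑ q, if p = q then 0 else (μ p ^ 2 + μ q ^ 2) * σ := by
      simp_rw [add_mul, sum_sum_ite_eq_zero_add, ← sum_mul, hcard]
      ring
    _ ≤ _ := sum_le_sum fun p _ => sum_le_sum fun q _ => ?_
  split_ifs with hpq
  · subst hpq
    simp [isotropicCurvature_pair_self hleft hright]
  · have hframe : Orthonormal ℝ ![b (.inl p), b (.inr p), b (.inl q), b (.inr q)] := by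
      simp [b.inner_eq_ite, Fin.forall_fin_succ, hpq]
    have hframe' : Orthonormal ℝ ![b (.inl p), b (.inr p), b (.inr q), b (.inl q)] := by
      simp [b.inner_eq_ite, Fin.forall_fin_succ, hpq]
    calc (μ p ^ 2 + μ q ^ 2) * σ
      _ = (μ p + μ q) ^ 2 / 2 * σ + (μ p - μ q) ^ 2 / 2 * σ := by ring
      _ ≤ _ := by gcongr <;> apply hiso <;> assumption

end WeitzenbockForm

section SkewMatrix

variable {ι : Type*} [Fintype ι]

theorem two_mul_sum_curvature_eq_of_bianchi {K : Type*} [CommRing K] {R : ι → ι → ι → ι → K}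
    {a : ι → ι → K} (hR : ∀ i j k l, R i j k l = -R j i k l)
    (hBianchi : ∀ i j k l, R i j k l + R j k i l + R k i j l = 0) (ha : ∀ i j, a j i = -a i j) :
    2 * ∑ i, ∑ j, (∑ k, ∑ l, R i k j l * a k l) * a i j =
      ∑ i, ∑ j, ∑ k, ∑ l, R i j k l * a i j * a k l := by
  have hswap : ∑ i, ∑ j, (∑ k, ∑ l, R i k j l * a k l) * a i j =
      -∑ i, ∑ j, (∑ k, ∑ l, R j k i l * a k l) * a i j := by
    rw [sum_comm]
    simp only [← sum_neg_distrib]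
    exact sum_congr rfl fun i _ => sum_congr rfl fun j _ => by rw [ha i j]; ring
  have hcyclic (i j k l : ι) : R i j k l = R i k j l - R j k i l := by
    linear_combination hBianchi i j k l - hR k i j l
  rw [two_mul]
  nth_rewrite 2 [hswap]
  simp only [← sub_eq_add_neg, ← sum_sub_distrib, sum_mul]
  exact sum_congr rfl fun i _ => sum_congr rfl fun j _ => sum_congr rfl fun k _ =>
    sum_congr rfl fun l _ => by rw [hcyclic i j]; ring

variable [DecidableEq ι]

theorem inner_toEuclideanLin_of_skew {a : Matrix ι ι ℝ} (ha : ∀ i j, a j i = -a i j)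
    (x y : EuclideanSpace ℝ ι) :
    ⟪Matrix.toEuclideanLin a x, y⟫ = -⟪x, Matrix.toEuclideanLin a y⟫ := by
  have hadjoint : (Matrix.toEuclideanLin a).adjoint = -Matrix.toEuclideanLin a := by
    rw [← Matrix.toEuclideanLin_conjTranspose_eq_adjoint, ← map_neg]
    congr 1
    ext i j
    simp [ha i j]
  rw [← LinearMap.adjoint_inner_right, hadjoint, LinearMap.neg_apply, inner_neg_right]

theorem sum_norm_sq_toEuclideanLin_basisFun (a : Matrix ι ι ℝ) :
    ∑ j, ‖Matrix.toEuclideanLin a (EuclideanSpace.basisFun ι ℝ j)‖ ^ 2 =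
      ∑ i, ∑ j, a i j ^ 2 := by
  rw [sum_comm]
  simp [EuclideanSpace.norm_sq_eq]

end SkewMatrix

section Components

variable {n : ℕ} {R : Fin n → Fin n → Fin n → Fin n → ℝ} {a : Matrix (Fin n) (Fin n) ℝ}

/-- The multilinear extension `curvExt R` as a bundled quadrilinear form, determined by its values
`R i j k l` on the standard basis. -/
noncomputable def curvForm (R : Fin n → Fin n → Fin n → Fin n → ℝ) :
    QuadrilinearForm (EuclideanSpace ℝ (Fin n)) :=
  let ε := (EuclideanSpace.basisFun (Fin n) ℝ).toBasis
  ε.constr ℝ fun i => ε.constr ℝ fun j => ε.constr ℝ fun k => ε.constr ℝ fun l => R i j k l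

theorem curvForm_apply (x y z w : EuclideanSpace ℝ (Fin n)) :
    curvForm R x y z w = curvExt R x y z w := by
  simp only [curvForm, curvExt, Basis.constr_apply_fintype, Basis.equivFun_apply,
    OrthonormalBasis.coe_toBasis_repr_apply, EuclideanSpace.basisFun_repr, LinearMap.sum_apply,
    LinearMap.smul_apply, smul_eq_mul, mul_sum]
  exact sum_congr rfl fun i _ => sum_congr rfl fun j _ => sum_congr rfl fun k _ =>
    sum_congr rfl fun l _ => by ring

theorem curvForm_swap_left (hR : ∀ i j k l, R i j k l = -R j i k l)
    (x y z w : EuclideanSpace ℝ (Fin n)) : curvForm R x y z w = -curvForm R y x z w := by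
  simp only [curvForm_apply, curvExt, ← sum_neg_distrib]
  rw [sum_comm]
  exact sum_congr rfl fun i _ => sum_congr rfl fun j _ => sum_congr rfl fun k _ =>
    sum_congr rfl fun l _ => by rw [hR j i]; ring

theorem curvForm_swap_right (hR : ∀ i j k l, R i j k l = -R i j l k)
    (x y z w : EuclideanSpace ℝ (Fin n)) : curvForm R x y z w = -curvForm R x y w z := by
  simp only [curvForm_apply, curvExt, ← sum_neg_distrib]
  refine sum_congr rfl fun i _ => sum_congr rfl fun j _ => ?_
  rw [sum_comm]
  exact sum_congr rfl fun k _ => sum_congr rfl fun l _ => by rw [hR i j l k]; ring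

/-- The quadratic form `⟨ℛa, a⟩` of the Weitzenböck operator on real two-forms. -/
noncomputable def weitzenbockQuadForm (R : Fin n → Fin n → Fin n → Fin n → ℝ)
    (a : Matrix (Fin n) (Fin n) ℝ) : ℝ :=
  ∑ i, ∑ j, ((∑ k, ricci R i k * a k j) + (∑ k, a i k * ricci R k j) -
    2 * ∑ k, ∑ l, R i k j l * a k l) * a i j

theorem re_weitzenbockOp_inner (R : Fin n → Fin n → Fin n → Fin n → ℝ) (ω : Fin n → Fin n → ℂ) :
    (∑ i, ∑ j, weitzenbockOp R ω i j * (starRingEnd ℂ) (ω i j)).re =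
      weitzenbockQuadForm R (.of fun i j => (ω i j).re) +
        weitzenbockQuadForm R (.of fun i j => (ω i j).im) := by
  simp only [weitzenbockQuadForm, Complex.re_sum, ← sum_add_distrib]
  refine sum_congr rfl fun i _ => sum_congr rfl fun j _ => ?_
  simp [weitzenbockOp, Complex.mul_re, Complex.re_sum, Complex.im_sum, sum_add_distrib]

theorem weitzenbockForm_toEuclideanLin_basisFun (R : Fin n → Fin n → Fin n → Fin n → ℝ)
    (a : Matrix (Fin n) (Fin n) ℝ) :
    weitzenbockForm (curvForm R) (Matrix.toEuclideanLin a) (EuclideanSpace.basisFun (Fin n) ℝ) =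
      2 * ∑ i, ∑ j, (∑ k, ricci R i k * a k j) * a i j -
        ∑ i, ∑ j, ∑ k, ∑ l, R i j k l * a i j * a k l := by
  have hcontract (x y : EuclideanSpace ℝ (Fin n)) (j l : Fin n) :
      curvForm R x (EuclideanSpace.basisFun (Fin n) ℝ j) y
        (EuclideanSpace.basisFun (Fin n) ℝ l) = ∑ i, ∑ k, R i j k l * x i * y k := by
    simp [curvForm_apply, curvExt]
  have hentry (i j : Fin n) :
      Matrix.toEuclideanLin a (EuclideanSpace.basisFun (Fin n) ℝ j) i = a i j := by
    simp
  have hRicci : ∑ j, ∑ q, ∑ i, ∑ k, R i q k q * a i j * a k j =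
      ∑ i, ∑ j, (∑ k, ricci R i k * a k j) * a i j := by
    calc ∑ j, ∑ q, ∑ i, ∑ k, R i q k q * a i j * a k j
      _ = ∑ j, ∑ i, ∑ k, ∑ q, R i q k q * a i j * a k j :=
        sum_congr rfl fun j _ => sum_comm_cycle.symm
      _ = ∑ i, ∑ j, (∑ k, ricci R i k * a k j) * a i j := by
        rw [sum_comm]
        simp only [ricci, sum_mul, mul_right_comm]
  have hcurv : ∑ j, ∑ l, ∑ i, ∑ k, R i j k l * a i j * a k l =
      ∑ i, ∑ j, ∑ k, ∑ l, R i j k l * a i j * a k l := by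
    rw [sum_comm_cycle]
    exact sum_congr rfl fun i _ => sum_congr rfl fun j _ => sum_comm
  simp only [weitzenbockForm, hcontract, hentry, hRicci, hcurv]

theorem weitzenbockQuadForm_eq_weitzenbockForm (hR : ∀ i j k l, R i j k l = -R j i k l)
    (hBianchi : ∀ i j k l, R i j k l + R j k i l + R k i j l = 0) (ha : ∀ i j, a j i = -a i j) :
    weitzenbockQuadForm R a =
      weitzenbockForm (curvForm R) (Matrix.toEuclideanLin a)
        (EuclideanSpace.basisFun (Fin n) ℝ) := by
  have hRicci : ∑ i, ∑ j, (∑ k, a i k * ricci R k j) * a i j =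
      ∑ i, ∑ j, (∑ k, ricci R i k * a k j) * a i j := by
    simp only [sum_mul]
    rw [sum_comm_cycle]
    exact sum_congr rfl fun i _ => sum_congr rfl fun j _ => sum_congr rfl fun k _ => by
      rw [ha i j, ha k j]; ring
  rw [weitzenbockForm_toEuclideanLin_basisFun,
    ← two_mul_sum_curvature_eq_of_bianchi hR hBianchi ha, weitzenbockQuadForm]
  simp only [sub_mul, add_mul, sum_sub_distrib, sum_add_distrib, hRicci, mul_assoc, ← mul_sum]
  ring

theorem weitzenbockQuadForm_lower_bound_of_isotropic (hn : Even n) {σ : ℝ}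
    (hR1 : ∀ i j k l, R i j k l = -R j i k l) (hR2 : ∀ i j k l, R i j k l = -R i j l k)
    (hBianchi : ∀ i j k l, R i j k l + R j k i l + R k i j l = 0)
    (hIso : ∀ v₁ v₂ v₃ v₄, Orthonormal ℝ ![v₁, v₂, v₃, v₄] →
      σ ≤ isotropicCurvature (curvForm R) v₁ v₂ v₃ v₄) (ha : ∀ i j, a j i = -a i j) :
    ((n : ℝ) - 2) / 2 * σ * ∑ i, ∑ j, a i j ^ 2 ≤ weitzenbockQuadForm R a := by
  rw [weitzenbockQuadForm_eq_weitzenbockForm hR1 hBianchi ha, ← sum_norm_sq_toEuclideanLin_basisFun]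
  simpa using weitzenbockForm_lower_bound_of_isotropic (curvForm_swap_left hR1)
    (curvForm_swap_right hR2) hIso (inner_toEuclideanLin_of_skew ha) (by simpa using hn)
    (EuclideanSpace.basisFun (Fin n) ℝ)

end Components

theorem weitzenbock_curvature_lower_bound_of_isotropic_general (n : ℕ) (hne : Even n)
    (σ : ℝ) (R : Fin n → Fin n → Fin n → Fin n → ℝ)
    (hR1 : ∀ i j k l, R i j k l = -R j i k l)
    (hR2 : ∀ i j k l, R i j k l = -R i j l k)
    (hBianchi : ∀ i j k l, R i j k l + R j k i l + R k i j l = 0)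
    (hIso : ∀ v₁ v₂ v₃ v₄ : EuclideanSpace ℝ (Fin n), Orthonormal ℝ ![v₁, v₂, v₃, v₄] →
      curvExt R v₁ v₃ v₁ v₃ + curvExt R v₁ v₄ v₁ v₄ + curvExt R v₂ v₃ v₂ v₃ +
        curvExt R v₂ v₄ v₂ v₄ - 2 * curvExt R v₁ v₂ v₃ v₄ ≥ σ)
    (ω : Fin n → Fin n → ℂ) (hω : ∀ i j, ω j i = -ω i j) :
    (∑ i, ∑ j, weitzenbockOp R ω i j * (starRingEnd ℂ) (ω i j)).re ≥
      ((n : ℝ) - 2) / 2 * σ * ∑ i, ∑ j, ‖ω i j‖ ^ 2 := by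
  have hIso' : ∀ v₁ v₂ v₃ v₄, Orthonormal ℝ ![v₁, v₂, v₃, v₄] →
      σ ≤ isotropicCurvature (curvForm R) v₁ v₂ v₃ v₄ := by
    simpa only [isotropicCurvature, curvForm_apply] using hIso
  have hre := weitzenbockQuadForm_lower_bound_of_isotropic hne hR1 hR2 hBianchi hIso'
    (a := .of fun i j => (ω i j).re) fun i j => by simp [hω i j]
  have him := weitzenbockQuadForm_lower_bound_of_isotropic hne hR1 hR2 hBianchi hIso'
    (a := .of fun i j => (ω i j).im) fun i j => by simp [hω i j]
  have hnorm : ∑ i, ∑ j, ‖ω i j‖ ^ 2 =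
      ∑ i, ∑ j, (ω i j).re ^ 2 + ∑ i, ∑ j, (ω i j).im ^ 2 := by
    simp only [← sum_add_distrib, Complex.sq_norm, Complex.normSq_apply, ← sq]
  rw [re_weitzenbockOp_inner, hnorm, mul_add]
  exact add_le_add hre him

/-- If `n ≥ 4` is even and the isotropic curvature of an algebraic curvature tensor `R` on
`ℝ^n` is uniformly bounded below by `σ ≥ 0`, then for every complex two-form `ω`,
`Re ⟨ℛω, ω⟩ ≥ ((n−2)/2)·σ·|ω|²`. -/
theorem weitzenbock_curvature_lower_bound_of_isotropic (n : ℕ) (hn : 4 ≤ n) (hne : Even n)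
    (σ : ℝ) (hσ : 0 ≤ σ) (R : Fin n → Fin n → Fin n → Fin n → ℝ)
    (hR1 : ∀ i j k l, R i j k l = -R j i k l)
    (hR2 : ∀ i j k l, R i j k l = -R i j l k)
    (hR3 : ∀ i j k l, R i j k l = R k l i j)
    (hBianchi : ∀ i j k l, R i j k l + R j k i l + R k i j l = 0)
    (hIso : ∀ v₁ v₂ v₃ v₄ : EuclideanSpace ℝ (Fin n), Orthonormal ℝ ![v₁, v₂, v₃, v₄] →
      curvExt R v₁ v₃ v₁ v₃ + curvExt R v₁ v₄ v₁ v₄ + curvExt R v₂ v₃ v₂ v₃ +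
        curvExt R v₂ v₄ v₂ v₄ - 2 * curvExt R v₁ v₂ v₃ v₄ ≥ σ)
    (ω : Fin n → Fin n → ℂ) (hω : ∀ i j, ω j i = -ω i j) :
    (∑ i, ∑ j, weitzenbockOp R ω i j * (starRingEnd ℂ) (ω i j)).re ≥
      ((n : ℝ) - 2) / 2 * σ * ∑ i, ∑ j, ‖ω i j‖ ^ 2 :=
  weitzenbock_curvature_lower_bound_of_isotropic_general n hne σ R hR1 hR2 hBianchi hIso ω hω
end

section
/- Let m ≥ 2, let λ ∈ ℝ, and let A : Fin m → Fin m → ℝ be a symmetric matrix such that A(X,X) + A(Y,Y) ≥ −λ for every pair of orthonormal vectors X, Y in EuclideanSpace ℝ (Fin m), where A(X,Y) = Σ_{i,j} A i j · X i · Y j. Then for every skew-symmetric matrix ω : Fin m → Fin m → ℂ one has Re ( Σ_{i,j,k} A i j · ω j k · conj(ω i k) ) ≥ −(λ/2) · Σ_{i,k} |ω i k|². -/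
/-!
Both sides are linear in the Gram matrix `ω ωᴴ`, and its trace is the squared norm of `ω`.
A unitary congruence `ω ↦ Uᴴ ω (Uᴴ)ᵀ` keeps `ω` skew-symmetric and conjugates the Gram matrix
by `U`, so after replacing `A` by `Uᴴ A U` one may assume that `ω ωᴴ` is diagonal. Then
`tr (A ω ωᴴ) = ∑ p q, A p p * |ω p q| ^ 2`, which by the symmetry of `|ω p q|` in `p, q` equals
`(1 / 2) ∑ p q, (A p p + A q q) * |ω p q| ^ 2`. The terms with `p = q` vanish because `ω` is
skew-symmetric, and for the others almost 2-convexity bounds `A p p + A q q` from below.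
A complex two-form paired with a real form `A` splits into its real and imaginary parts.
-/

open Finset

open Matrix RCLike

lemma mul_sum_sum_le_two_mul_sum_sum {ι R : Type*} [Fintype ι] [CommRing R] [LinearOrder R]
    [IsStrictOrderedRing R] {c : R} {d : ι → R} {w : ι → ι → R}
    (hd : ∀ p q, p ≠ q → c ≤ d p + d q) (hw_nonneg : ∀ p q, 0 ≤ w p q)
    (hw_symm : ∀ p q, w p q = w q p) (hw_diag : ∀ p, w p p = 0) :
    c * ∑ p, ∑ q, w p q ≤ 2 * ∑ p, ∑ q, d p * w p q := by
  have hswap : ∑ p, ∑ q, d p * w p q = ∑ p, ∑ q, d q * w p q := by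
    rw [sum_comm]
    simp only [hw_symm]
  calc c * ∑ p, ∑ q, w p q = ∑ p, ∑ q, c * w p q := by simp only [mul_sum]
    _ ≤ ∑ p, ∑ q, (d p + d q) * w p q := by
      refine sum_le_sum fun p _ => sum_le_sum fun q _ => ?_
      obtain rfl | hpq := eq_or_ne p q
      · simp only [hw_diag, mul_zero, le_refl]
      · exact mul_le_mul_of_nonneg_right (hd p q hpq) (hw_nonneg p q)
    _ = 2 * ∑ p, ∑ q, d p * w p q := by
      simp only [add_mul, sum_add_distrib, ← hswap, two_mul]

lemma trace_mul_of_isDiag {n R : Type*} [Fintype n] [NonUnitalNonAssocSemiring R]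
    (A : Matrix n n R) {P : Matrix n n R} (hP : P.IsDiag) :
    (A * P).trace = ∑ p, A p p * P p p := by
  classical
  rw [← hP.diagonal_diag]
  simp only [trace, diag_apply, mul_diagonal, diagonal_apply_eq]

section GramMatrix

variable {n 𝕜 : Type*} [Fintype n] [RCLike 𝕜]

lemma mul_conjTranspose_self_apply_diag {m : Type*} (M : Matrix m n 𝕜) (p : m) :
    (M * Mᴴ) p p = ((∑ q, ‖M p q‖ ^ 2 : ℝ) : 𝕜) := by
  simp only [mul_apply, conjTranspose_apply, star_def, mul_conj, ofReal_sum, ofReal_pow]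

lemma re_trace_mul_conjTranspose_self {m : Type*} [Fintype m] (M : Matrix m n 𝕜) :
    re (M * Mᴴ).trace = ∑ p, ∑ q, ‖M p q‖ ^ 2 := by
  simp only [trace, diag_apply, mul_conjTranspose_self_apply_diag, map_sum, ofReal_re]

end GramMatrix

lemma transpose_congr_eq_neg {m n R : Type*} [Fintype n] [CommRing R] (V : Matrix m n R)
    {ω : Matrix n n R} (hω : ωᵀ = -ω) : (V * ω * Vᵀ)ᵀ = -(V * ω * Vᵀ) := by
  simp only [transpose_mul, transpose_transpose, hω, Matrix.neg_mul, Matrix.mul_neg,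
    Matrix.mul_assoc]

lemma conjTranspose_mul_mul_apply_diag {m n R : Type*} [Fintype n] [NonUnitalSemiring R] [Star R]
    (A : Matrix n n R) (U : Matrix n m R) (p : m) :
    (Uᴴ * A * U) p p = star (U.col p) ⬝ᵥ A *ᵥ U.col p := by
  rw [Matrix.mul_assoc]
  rfl

section ChangeOfBasis

variable {m n R : Type*} [Fintype m] [Fintype n] [DecidableEq n] [CommSemiring R]

lemma congr_mul_conjTranspose_self [StarRing R] {V : Matrix m n R} (hV : Vᴴ * V = 1)
    (ω : Matrix n n R) :
    (V * ω * Vᵀ) * (V * ω * Vᵀ)ᴴ = V * (ω * ωᴴ) * Vᴴ := by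
  have hVt : Vᵀ * Vᵀᴴ = 1 := by
    rw [conjTranspose_transpose_eq_transpose_conjTranspose, ← transpose_mul, hV, transpose_one]
  calc (V * ω * Vᵀ) * (V * ω * Vᵀ)ᴴ = V * ω * (Vᵀ * Vᵀᴴ) * ωᴴ * Vᴴ := by
        simp only [conjTranspose_mul, Matrix.mul_assoc]
    _ = V * (ω * ωᴴ) * Vᴴ := by rw [hVt, Matrix.mul_one, Matrix.mul_assoc V]

lemma trace_conj {U : Matrix n m R} {V : Matrix m n R} (hUV : U * V = 1) (P : Matrix n n R) :
    (V * P * U).trace = P.trace := by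
  rw [trace_mul_comm, ← Matrix.mul_assoc, hUV, Matrix.one_mul]

lemma trace_conj_mul_conj {U : Matrix n m R} {V : Matrix m n R} (hUV : U * V = 1)
    (A P : Matrix n n R) : (V * A * U * (V * P * U)).trace = (A * P).trace := by
  calc (V * A * U * (V * P * U)).trace = (V * (A * (U * V) * P) * U).trace := by
        simp only [Matrix.mul_assoc]
    _ = (A * P).trace := by rw [hUV, Matrix.mul_one, trace_conj hUV]

end ChangeOfBasis

lemma exists_mem_unitaryGroup_conj_isDiag {n 𝕜 : Type*} [Fintype n] [DecidableEq n] [RCLike 𝕜]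
    {P : Matrix n n 𝕜} (hP : P.IsHermitian) : ∃ U ∈ unitaryGroup n 𝕜, (Uᴴ * P * U).IsDiag := by
  refine ⟨hP.eigenvectorUnitary, hP.eigenvectorUnitary.2, ?_⟩
  rw [← star_eq_conjTranspose, ← Unitary.conjStarAlgAut_star_apply (S := 𝕜),
    hP.conjStarAlgAut_star_eigenvectorUnitary]
  exact isDiag_diagonal _

section AlmostTwoConvex

variable {n 𝕜 : Type*} [Fintype n] [RCLike 𝕜] {A ω : Matrix n n 𝕜} {lam : ℝ}

/-- Almost 2-convexity of a second fundamental form `A` with defect `lam`: the values of the form on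
any orthonormal pair sum to at least `-lam`. The form is `X ↦ re (Xᴴ A X)`, so that real and complex
scalars are covered at once, and `A` is an arbitrary square matrix. -/
def IsAlmostTwoConvex (A : Matrix n n 𝕜) (lam : ℝ) : Prop :=
  ∀ X Y : EuclideanSpace 𝕜 n, Orthonormal 𝕜 ![X, Y] →
    -lam ≤ re (star ⇑X ⬝ᵥ A *ᵥ ⇑X) + re (star ⇑Y ⬝ᵥ A *ᵥ ⇑Y)

lemma orthonormal_col {m : Type*} [DecidableEq m] {U : Matrix n m 𝕜} (hU : Uᴴ * U = 1) :
    Orthonormal 𝕜 fun p => WithLp.toLp 2 (U.col p) := by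
  refine orthonormal_iff_ite.mpr fun p q => ?_
  rw [EuclideanSpace.inner_eq_star_dotProduct, dotProduct_comm, ← one_apply, ← hU]
  rfl

lemma IsAlmostTwoConvex.neg_le_re_conj_apply_diag_add {m : Type*} [DecidableEq m]
    (hA : IsAlmostTwoConvex A lam) {U : Matrix n m 𝕜} (hU : Uᴴ * U = 1) {p q : m} (hpq : p ≠ q) :
    -lam ≤ re ((Uᴴ * A * U) p p) + re ((Uᴴ * A * U) q q) := by
  rw [conjTranspose_mul_mul_apply_diag, conjTranspose_mul_mul_apply_diag]
  refine hA (WithLp.toLp 2 (U.col p)) (WithLp.toLp 2 (U.col q)) ?_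
  have hinj : Function.Injective ![p, q] := by
    simpa [Function.Injective, Fin.forall_fin_two, eq_comm] using hpq
  have hcomp := (orthonormal_col hU).comp _ hinj
  rwa [← FinVec.map_eq] at hcomp

lemma neg_mul_re_trace_le_two_mul_re_trace_of_isDiag
    (hd : ∀ p q, p ≠ q → -lam ≤ re (A p p) + re (A q q))
    (hω : ωᵀ = -ω) (hdiag : (ω * ωᴴ).IsDiag) :
    -lam * re (ω * ωᴴ).trace ≤ 2 * re (A * (ω * ωᴴ)).trace := by
  have hskew (p q : n) : ω q p = -ω p q := congrFun (congrFun hω p) q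
  have hzero (p : n) : ω p p = 0 := self_eq_neg.mp (hskew p p)
  have htrace : re (A * (ω * ωᴴ)).trace = ∑ p, ∑ q, re (A p p) * ‖ω p q‖ ^ 2 := by
    simp only [trace_mul_of_isDiag A hdiag, mul_conjTranspose_self_apply_diag, map_sum,
      re_mul_ofReal, mul_sum]
  rw [re_trace_mul_conjTranspose_self, htrace]
  refine mul_sum_sum_le_two_mul_sum_sum hd (fun p q => sq_nonneg _) (fun p q => ?_) fun p => ?_
  · rw [hskew p q, norm_neg]
  · rw [hzero, norm_zero, zero_pow two_ne_zero]

theorem IsAlmostTwoConvex.neg_half_mul_sum_norm_sq_le (hA : IsAlmostTwoConvex A lam)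
    (hω : ωᵀ = -ω) :
    -(lam / 2) * ∑ i, ∑ k, ‖ω i k‖ ^ 2 ≤ re (A * (ω * ωᴴ)).trace := by
  classical
  obtain ⟨U, hU, hdiag⟩ :=
    exists_mem_unitaryGroup_conj_isDiag (isHermitian_mul_conjTranspose_self ω)
  have hUU' : U * Uᴴ = 1 := mem_unitaryGroup_iff.mp hU
  have hU'U : Uᴴ * U = 1 := mem_unitaryGroup_iff'.mp hU
  have hgram : Uᴴ * ω * Uᴴᵀ * (Uᴴ * ω * Uᴴᵀ)ᴴ = Uᴴ * (ω * ωᴴ) * U := by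
    rw [congr_mul_conjTranspose_self (by rwa [conjTranspose_conjTranspose]),
      conjTranspose_conjTranspose]
  have key := neg_mul_re_trace_le_two_mul_re_trace_of_isDiag
    (fun _ _ => hA.neg_le_re_conj_apply_diag_add hU'U) (transpose_congr_eq_neg Uᴴ hω)
    (hgram ▸ hdiag)
  rw [hgram, trace_conj_mul_conj hUU', trace_conj hUU', re_trace_mul_conjTranspose_self] at key
  linarith

end AlmostTwoConvex

lemma isAlmostTwoConvex_real_iff {n : Type*} [Fintype n] {A : Matrix n n ℝ} {lam : ℝ} :
    IsAlmostTwoConvex A lam ↔ ∀ X Y : EuclideanSpace ℝ n, Orthonormal ℝ ![X, Y] →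
      (∑ i, ∑ j, A i j * X i * X j) + (∑ i, ∑ j, A i j * Y i * Y j) ≥ -lam := by
  have hform (X : EuclideanSpace ℝ n) :
      re (star ⇑X ⬝ᵥ A *ᵥ ⇑X) = ∑ i, ∑ j, A i j * X i * X j := by
    simp only [dotProduct, mulVec, mul_sum, re_to_real, Pi.star_apply, star_trivial,
      mul_left_comm, mul_assoc]
  simp only [IsAlmostTwoConvex, hform, ge_iff_le]

lemma trace_mul_mul_transpose_eq_sum {n R : Type*} [Fintype n] [NonUnitalSemiring R]
    (A S : Matrix n n R) :
    (A * (S * Sᵀ)).trace = ∑ i, ∑ j, ∑ k, A i j * S j k * S i k := by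
  simp only [trace, diag_apply, mul_apply, transpose_apply, mul_sum, mul_assoc]

theorem almost_two_convexity_estimate_general {ι : Type*} [Fintype ι] (lam : ℝ)
    (A : Matrix ι ι ℝ)
    (hA : ∀ X Y : EuclideanSpace ℝ ι, Orthonormal ℝ ![X, Y] →
      (∑ i, ∑ j, A i j * X i * X j) + (∑ i, ∑ j, A i j * Y i * Y j) ≥ -lam)
    (ω : ι → ι → ℂ) (hω : ∀ i j, ω j i = -ω i j) :
    (∑ i, ∑ j, ∑ k, (A i j : ℂ) * ω j k * (starRingEnd ℂ) (ω i k)).re ≥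
      -(lam / 2) * ∑ i, ∑ k, ‖ω i k‖ ^ 2 := by
  have hreal (S : Matrix ι ι ℝ) (hS : Sᵀ = -S) :
      -(lam / 2) * ∑ i, ∑ k, S i k ^ 2 ≤ ∑ i, ∑ j, ∑ k, A i j * S j k * S i k := by
    simpa only [Real.norm_eq_abs, sq_abs, conjTranspose_eq_transpose_of_trivial, re_to_real,
      trace_mul_mul_transpose_eq_sum] using
      (isAlmostTwoConvex_real_iff.mpr hA).neg_half_mul_sum_norm_sq_le hS
  have hre := hreal (of fun i j => (ω i j).re) (by ext i j; simp [hω i j])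
  have him := hreal (of fun i j => (ω i j).im) (by ext i j; simp [hω i j])
  have hform : (∑ i, ∑ j, ∑ k, (A i j : ℂ) * ω j k * (starRingEnd ℂ) (ω i k)).re
      = ∑ i, ∑ j, ∑ k, A i j * (ω j k).re * (ω i k).re
        + ∑ i, ∑ j, ∑ k, A i j * (ω j k).im * (ω i k).im := by
    simp only [Complex.re_sum, ← sum_add_distrib]
    simp
  have hnorm : ∑ i, ∑ k, ‖ω i k‖ ^ 2
      = ∑ i, ∑ k, (ω i k).re ^ 2 + ∑ i, ∑ k, (ω i k).im ^ 2 := by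
    simp only [← sum_add_distrib, Complex.sq_norm, Complex.normSq_apply, ← pow_two]
  rw [hform, hnorm, mul_add]
  exact add_le_add hre him

/-- Pointwise algebraic content of the boundary estimate under almost 2-convexity:
if the symmetric matrix `A` satisfies `A(X,X) + A(Y,Y) ≥ −λ` for all orthonormal `X, Y`, then
for every skew-symmetric `ω : Fin m → Fin m → ℂ`,
`Re (Σ_{i,j,k} A i j · ω j k · conj(ω i k)) ≥ −(λ/2)·Σ_{i,k} |ω i k|²`. -/
theorem almost_two_convexity_estimate (m : ℕ) (hm : 2 ≤ m) (lam : ℝ)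
    (A : Fin m → Fin m → ℝ) (hAsymm : ∀ i j, A i j = A j i)
    (hA : ∀ X Y : EuclideanSpace ℝ (Fin m), Orthonormal ℝ ![X, Y] →
      (∑ i, ∑ j, A i j * X i * X j) + (∑ i, ∑ j, A i j * Y i * Y j) ≥ -lam)
    (ω : Fin m → Fin m → ℂ) (hω : ∀ i j, ω j i = -ω i j) :
    (∑ i, ∑ j, ∑ k, (A i j : ℂ) * ω j k * (starRingEnd ℂ) (ω i k)).re ≥
      -(lam / 2) * ∑ i, ∑ k, ‖ω i k‖ ^ 2 :=
  almost_two_convexity_estimate_general lam A hA ω hω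
end

section
/- Let m ≥ 2, let λ ∈ ℝ, and let A : Fin m → Fin m → ℝ be a symmetric matrix such that Σ_{a=1}^{m−1} A(X_a, X_a) ≥ −λ for every orthonormal (m−1)-tuple of vectors X_1, …, X_{m−1} in EuclideanSpace ℝ (Fin m), where A(X,Y) = Σ_{i,j} A i j · X i · Y j. Then for every vector w : Fin m → ℂ one has (Σ_i A i i) · (Σ_i |w i|²) − Re ( Σ_{i,j} A i j · w j · conj(w i) ) ≥ −λ · Σ_i |w i|². -/
open Finset

/-!
Complete a unit vector `u` to an orthonormal basis by vectors `X a`. Computing the trace in this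
basis turns `tr A - A(u, u)` into `∑ a, A(X a, X a)`, which the hypothesis bounds below; homogeneity
removes the normalization of `u`. For coefficients `w i` in a real inner product space, such as `ℂ`,
apply this to each family of coordinates of the `w i` in an orthonormal basis of their span and add
up: by Parseval the squares add up to `∑ i, ‖w i‖ ^ 2` and the values of `A` to
`∑ i, ∑ j, A i j * ⟪w i, w j⟫`.
-/

open Module RCLike
open scoped InnerProductSpace ComplexConjugate

section Operator

variable {𝕜 E κ : Type*} [RCLike 𝕜] [NormedAddCommGroup E] [InnerProductSpace 𝕜 E] [Fintype κ]

theorem exists_orthonormal_trace_eq_inner_add_sum_inner (hκ : finrank 𝕜 E = Fintype.card κ + 1)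
    (T : E →ₗ[𝕜] E) {u : E} (hu : ‖u‖ = 1) :
    ∃ X : κ → E, Orthonormal 𝕜 X ∧
      LinearMap.trace 𝕜 E T = ⟪u, T u⟫_𝕜 + ∑ a, ⟪X a, T (X a)⟫_𝕜 := by
  have : FiniteDimensional 𝕜 E := .of_finrank_pos (by omega)
  have hu' : Orthonormal 𝕜 (({none} : Set (Option κ)).domRestrict fun _ ↦ u) :=
    ⟨fun _ ↦ hu, fun i j hij ↦ (hij (Subsingleton.elim i j)).elim⟩
  obtain ⟨b, hb⟩ := hu'.exists_orthonormalBasis_extension_of_card_eq (by simpa using hκ)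
  refine ⟨fun a ↦ b (some a), b.orthonormal.comp _ (Option.some_injective κ), ?_⟩
  rw [LinearMap.trace_eq_sum_inner T b, Fintype.sum_option, hb none rfl]

theorem mul_norm_sq_le_trace_mul_norm_sq_sub_inner (hκ : finrank 𝕜 E = Fintype.card κ + 1)
    {T : E →ₗ[𝕜] E} {c : ℝ}
    (hT : ∀ X : κ → E, Orthonormal 𝕜 X → c ≤ ∑ a, re ⟪X a, T (X a)⟫_𝕜) (v : E) :
    c * ‖v‖ ^ 2 ≤ re (LinearMap.trace 𝕜 E T) * ‖v‖ ^ 2 - re ⟪v, T v⟫_𝕜 := by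
  obtain rfl | hv := eq_or_ne v 0
  · simp
  obtain ⟨u, hu, hvu⟩ : ∃ u : E, ‖u‖ = 1 ∧ v = (‖v‖ : 𝕜) • u :=
    ⟨(‖v‖⁻¹ : 𝕜) • v, norm_smul_inv_norm hv, by simp [smul_smul, hv]⟩
  obtain ⟨X, hX, htrace⟩ := exists_orthonormal_trace_eq_inner_add_sum_inner hκ T hu
  have hunit : c ≤ re (LinearMap.trace 𝕜 E T) - re ⟪u, T u⟫_𝕜 := by
    simpa [htrace] using hT X hX
  have hquad : re ⟪v, T v⟫_𝕜 = re ⟪u, T u⟫_𝕜 * ‖v‖ ^ 2 := by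
    rw [hvu, map_smul, inner_smul_left, inner_smul_right, conj_ofReal, re_ofReal_mul,
      re_ofReal_mul, ← hvu]
    ring
  calc c * ‖v‖ ^ 2 ≤ (re (LinearMap.trace 𝕜 E T) - re ⟪u, T u⟫_𝕜) * ‖v‖ ^ 2 := by gcongr
    _ = re (LinearMap.trace 𝕜 E T) * ‖v‖ ^ 2 - re ⟪v, T v⟫_𝕜 := by rw [hquad, sub_mul]

end Operator

section Matrix

variable {ι κ : Type*} [Fintype ι] [Fintype κ]

theorem trace_toEuclideanLin {𝕜 : Type*} [RCLike 𝕜] [DecidableEq ι] (A : Matrix ι ι 𝕜) :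
    LinearMap.trace 𝕜 (EuclideanSpace 𝕜 ι) A.toEuclideanLin = A.trace := by
  simp [LinearMap.trace_eq_sum_inner _ (EuclideanSpace.basisFun ι 𝕜), Matrix.trace,
    EuclideanSpace.inner_single_left]

theorem inner_toEuclideanLin_eq_sum {𝕜 : Type*} [RCLike 𝕜] [DecidableEq κ]
    (A : Matrix ι κ 𝕜) (x : EuclideanSpace 𝕜 ι) (y : EuclideanSpace 𝕜 κ) :
    ⟪x, A.toEuclideanLin y⟫_𝕜 = ∑ i, ∑ j, A i j * conj (x i) * y j := by
  simp only [PiLp.inner_apply, Matrix.ofLp_toLpLin, Matrix.toLin'_apply, Matrix.mulVec, dotProduct,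
    inner_apply, sum_mul]
  exact sum_congr rfl fun i _ ↦ sum_congr rfl fun j _ ↦ mul_right_comm _ _ _

theorem mul_sum_sq_le_trace_mul_sum_sq_sub_sum
    (hκ : Fintype.card ι = Fintype.card κ + 1) {A : Matrix ι ι ℝ} {c : ℝ}
    (hA : ∀ X : κ → EuclideanSpace ℝ ι, Orthonormal ℝ X →
      c ≤ ∑ a, ∑ i, ∑ j, A i j * X a i * X a j)
    (v : ι → ℝ) :
    c * ∑ i, v i ^ 2 ≤ A.trace * ∑ i, v i ^ 2 - ∑ i, ∑ j, A i j * v i * v j := by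
  classical
  have h := mul_norm_sq_le_trace_mul_norm_sq_sub_inner (𝕜 := ℝ) (T := A.toEuclideanLin)
    (by simpa using hκ)
    (by simpa only [re_to_real, inner_toEuclideanLin_eq_sum, conj_trivial] using hA)
    (WithLp.toLp 2 v)
  simpa only [re_to_real, inner_toEuclideanLin_eq_sum, conj_trivial, trace_toEuclideanLin,
    EuclideanSpace.real_norm_sq_eq] using h

theorem almost_n_sub_two_convexity_estimate_general {H : Type*}
    [NormedAddCommGroup H] [InnerProductSpace ℝ H]
    (hκ : Fintype.card ι = Fintype.card κ + 1) {A : Matrix ι ι ℝ} {c : ℝ}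
    (hA : ∀ X : κ → EuclideanSpace ℝ ι, Orthonormal ℝ X →
      c ≤ ∑ a, ∑ i, ∑ j, A i j * X a i * X a j)
    (w : ι → H) :
    c * ∑ i, ‖w i‖ ^ 2 ≤ A.trace * ∑ i, ‖w i‖ ^ 2 - ∑ i, ∑ j, A i j * ⟪w i, w j⟫_ℝ := by
  let S := Submodule.span ℝ (Set.range w)
  have : FiniteDimensional ℝ S := .span_of_finite ℝ (Set.finite_range w)
  let s : ι → S := fun i ↦ ⟨w i, Submodule.subset_span ⟨i, rfl⟩⟩
  let b := stdOrthonormalBasis ℝ S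
  have hinner (i j : ι) : ⟪w i, w j⟫_ℝ = ∑ k, ⟪b k, s i⟫_ℝ * ⟪b k, s j⟫_ℝ :=
    calc ⟪w i, w j⟫_ℝ = ∑ k, ⟪s i, b k⟫_ℝ * ⟪b k, s j⟫_ℝ :=
        (b.sum_inner_mul_inner (s i) (s j)).symm
      _ = ∑ k, ⟪b k, s i⟫_ℝ * ⟪b k, s j⟫_ℝ := by simp_rw [real_inner_comm (b _) (s i)]
  have hnorm : ∑ i, ‖w i‖ ^ 2 = ∑ k, ∑ i, ⟪b k, s i⟫_ℝ ^ 2 := by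
    rw [sum_comm]
    exact sum_congr rfl fun i _ ↦ (b.sum_sq_inner_right (s i)).symm
  have hform : ∑ i, ∑ j, A i j * ⟪w i, w j⟫_ℝ =
      ∑ k, ∑ i, ∑ j, A i j * ⟪b k, s i⟫_ℝ * ⟪b k, s j⟫_ℝ := by
    simp_rw [hinner, mul_sum, ← mul_assoc]
    exact sum_comm_cycle
  rw [hnorm, hform, mul_sum, mul_sum, ← sum_sub_distrib]
  exact sum_le_sum fun k _ ↦ mul_sum_sq_le_trace_mul_sum_sq_sub_sum hκ hA fun i ↦ ⟪b k, s i⟫_ℝ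

end Matrix

/-- Pointwise algebraic content of the boundary estimate under almost (n−2)-convexity:
if the symmetric matrix `A : Fin m → Fin m → ℝ` satisfies `Σ_a A(X_a,X_a) ≥ −λ` for every
orthonormal `(m−1)`-tuple `X`, then for every vector `w : Fin m → ℂ`,
`(tr A)·Σ|w i|² − Re (Σ_{i,j} A i j · w j · conj(w i)) ≥ −λ·Σ|w i|²`. -/
theorem almost_n_sub_two_convexity_estimate (m : ℕ) (hm : 2 ≤ m) (lam : ℝ)
    (A : Fin m → Fin m → ℝ) (hAsymm : ∀ i j, A i j = A j i)
    (hA : ∀ X : Fin (m - 1) → EuclideanSpace ℝ (Fin m), Orthonormal ℝ X →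
      ∑ a, ∑ i, ∑ j, A i j * X a i * X a j ≥ -lam)
    (w : Fin m → ℂ) :
    (∑ i, A i i) * (∑ i, ‖w i‖ ^ 2) -
        (∑ i, ∑ j, (A i j : ℂ) * w j * (starRingEnd ℂ) (w i)).re ≥
      -lam * ∑ i, ‖w i‖ ^ 2 := by
  have h := almost_n_sub_two_convexity_estimate_general (by simp; omega) hA w
  simpa only [Complex.inner, Complex.re_sum, mul_assoc, Complex.re_ofReal_mul] using! h
end

section
/- Let E be a real inner product space and let ν ∈ E be a unit vector. Define the boundary map χ = c̃(ν) ∘ c(ν) on the exterior algebra ΛE. Then: (i) χ ∘ χ = id; (ii) χ = id − 2 · w(ν) ∘ ∂(ν); (iii) for every ω ∈ ΛE, χω = ω if and only if ∂(ν)ω = 0 (the absolute boundary condition n(ω) = 0); and (iv) χω = −ω if and only if w(ν)ω = 0, i.e. ν ∧ ω = 0 (the relative boundary condition t(ω) = 0). -/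
/-- Wedging with `x`: left multiplication by `ι x` on the exterior algebra. -/
noncomputable def wedgeMul {E : Type*} [NormedAddCommGroup E] [InnerProductSpace ℝ E] (x : E) :
    ExteriorAlgebra ℝ E →ₗ[ℝ] ExteriorAlgebra ℝ E :=
  LinearMap.mulLeft ℝ (ExteriorAlgebra.ι ℝ x)

/-- Left interior product (contraction) with the covector `⟨x, ·⟩` on the exterior algebra. -/
noncomputable def interiorMul {E : Type*} [NormedAddCommGroup E] [InnerProductSpace ℝ E] (x : E) :
    ExteriorAlgebra ℝ E →ₗ[ℝ] ExteriorAlgebra ℝ E :=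
  CliffordAlgebra.contractLeft (innerₛₗ ℝ x)

/-- The Clifford multiplication `c(x) = x ∧ · − i_x ·`. -/
noncomputable def cOp {E : Type*} [NormedAddCommGroup E] [InnerProductSpace ℝ E] (x : E) :
    ExteriorAlgebra ℝ E →ₗ[ℝ] ExteriorAlgebra ℝ E :=
  wedgeMul x - interiorMul x

/-- The Clifford multiplication `c̃(x) = x ∧ · + i_x ·`. -/
noncomputable def ctOp {E : Type*} [NormedAddCommGroup E] [InnerProductSpace ℝ E] (x : E) :
    ExteriorAlgebra ℝ E →ₗ[ℝ] ExteriorAlgebra ℝ E :=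
  wedgeMul x + interiorMul x

/-- The boundary map `χ = c̃(ν) ∘ c(ν)`. -/
noncomputable def chiOp {E : Type*} [NormedAddCommGroup E] [InnerProductSpace ℝ E] (ν : E) :
    ExteriorAlgebra ℝ E →ₗ[ℝ] ExteriorAlgebra ℝ E :=
  ctOp ν ∘ₗ cOp ν

/-! The operators `w = w(ν)` and `d = ∂(ν)` square to zero and, as `‖ν‖ = 1`, have anticommutator
`1`. Hence `χ = (w + d)(w - d)` is the difference `dw - wd` of complementary idempotents, a
reflection whose fixed space is `ker (wd)`; this is `ker d` because `dwd = d`. Exchanging `w`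
and `d` replaces `χ` by `-χ`, which identifies the `-1`-eigenspace with `ker w`. -/

/-- A pair `w`, `d` of square-zero elements with anticommutator `1`: the canonical anticommutation
relations of a single fermionic mode with creation operator `w` and annihilation operator `d`,
satisfied by wedging with a unit vector and contraction with it. -/
structure IsFermionPair {A : Type*} [Ring A] (w d : A) : Prop where
  left_mul_self : w * w = 0
  right_mul_self : d * d = 0
  anticommutator_eq_one : d * w + w * d = 1

namespace IsFermionPair

variable {A : Type*} [Ring A] {w d : A}

protected theorem symm (h : IsFermionPair w d) : IsFermionPair d w where
  left_mul_self := h.right_mul_self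
  right_mul_self := h.left_mul_self
  anticommutator_eq_one := (add_comm _ _).trans h.anticommutator_eq_one

theorem right_mul_left (h : IsFermionPair w d) : d * w = 1 - w * d :=
  eq_sub_of_add_eq h.anticommutator_eq_one

theorem right_mul_left_mul_right (h : IsFermionPair w d) : d * (w * d) = d := by
  rw [← mul_assoc, h.right_mul_left, sub_mul, one_mul, mul_assoc, h.right_mul_self, mul_zero,
    sub_zero]

theorem isIdempotentElem_mul (h : IsFermionPair w d) : IsIdempotentElem (w * d) := by
  rw [IsIdempotentElem, mul_assoc, h.right_mul_left_mul_right]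

theorem add_mul_sub_eq_commutator (h : IsFermionPair w d) :
    (w + d) * (w - d) = d * w - w * d := by
  rw [add_mul, mul_sub, mul_sub, h.left_mul_self, h.right_mul_self]
  abel

theorem commutator_eq_one_sub (h : IsFermionPair w d) :
    d * w - w * d = 1 - 2 * (w * d) := by
  rw [h.right_mul_left, two_mul, sub_sub]

theorem commutator_mul_self (h : IsFermionPair w d) :
    (d * w - w * d) * (d * w - w * d) = 1 := by
  have hp : w * d * (w * d) = w * d := h.isIdempotentElem_mul
  rw [h.commutator_eq_one_sub]
  linear_combination (norm := noncomm_ring) 4 * hp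

variable {M : Type*} [AddCommGroup M] [Module A M]

theorem mul_smul_eq_zero_iff (h : IsFermionPair w d) {x : M} : (w * d) • x = 0 ↔ d • x = 0 := by
  refine ⟨fun hx => ?_, fun hx => by rw [mul_smul, hx, smul_zero]⟩
  rw [← h.right_mul_left_mul_right, mul_smul, hx, smul_zero]

theorem commutator_smul_eq_self_iff (h : IsFermionPair w d) (h2 : IsSMulRegular M (2 : ℕ)) {x : M} :
    (d * w - w * d) • x = x ↔ d • x = 0 :=
  calc (d * w - w * d) • x = x
      ↔ 2 • (w * d) • x = 0 := by
        rw [h.commutator_eq_one_sub, sub_smul, one_smul, sub_eq_self, mul_smul,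
          ofNat_smul_eq_nsmul]
    _ ↔ (w * d) • x = 0 := ⟨h2.right_eq_zero_of_smul, fun hx => by rw [hx, smul_zero]⟩
    _ ↔ d • x = 0 := h.mul_smul_eq_zero_iff

theorem commutator_smul_eq_neg_iff (h : IsFermionPair w d) (h2 : IsSMulRegular M (2 : ℕ)) {x : M} :
    (d * w - w * d) • x = -x ↔ w • x = 0 := by
  rw [← h.symm.commutator_smul_eq_self_iff h2, ← neg_sub (d * w), neg_smul, neg_eq_iff_eq_neg]

end IsFermionPair

theorem isFermionPair_mulLeft_contractLeft {R M : Type*} [CommRing R] [AddCommGroup M] [Module R M]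
    {Q : QuadraticForm R M} {ν : M} {α : Module.Dual R M} (hν : Q ν = 0) (hα : α ν = 1) :
    IsFermionPair (A := Module.End R (CliffordAlgebra Q))
      (LinearMap.mulLeft R (CliffordAlgebra.ι Q ν)) (CliffordAlgebra.contractLeft α) where
  left_mul_self := by
    rw [Module.End.mul_eq_comp, ← LinearMap.mulLeft_mul, CliffordAlgebra.ι_sq_scalar, hν, map_zero,
      LinearMap.mulLeft_zero_eq_zero]
  right_mul_self := LinearMap.ext (CliffordAlgebra.contractLeft_contractLeft α)
  anticommutator_eq_one := LinearMap.ext fun ω => by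
    change CliffordAlgebra.contractLeft α (CliffordAlgebra.ι Q ν * ω) +
      CliffordAlgebra.ι Q ν * CliffordAlgebra.contractLeft α ω = ω
    rw [CliffordAlgebra.contractLeft_ι_mul, hα, one_smul, sub_add_cancel]

theorem isFermionPair_wedgeMul_interiorMul {E : Type*} [NormedAddCommGroup E]
    [InnerProductSpace ℝ E] {ν : E} (hν : ‖ν‖ = 1) :
    IsFermionPair (A := Module.End ℝ (ExteriorAlgebra ℝ E)) (wedgeMul ν) (interiorMul ν) :=
  isFermionPair_mulLeft_contractLeft rfl (inner_self_eq_one_of_norm_eq_one (𝕜 := ℝ) hν)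

theorem boundary_map_properties_general {R M : Type*} [CommRing R] [AddCommGroup M] [Module R M]
    {w d : Module.End R M} (h : IsFermionPair w d) (h2 : IsSMulRegular M (2 : ℕ)) :
    let χ : Module.End R M := (w + d) ∘ₗ (w - d)
    (χ ∘ₗ χ = LinearMap.id) ∧
      (χ = LinearMap.id - (2 : R) • (w ∘ₗ d)) ∧
      (∀ x : M, χ x = x ↔ d x = 0) ∧
      (∀ x : M, χ x = -x ↔ w x = 0) := by
  intro χ
  have hχ : χ = d * w - w * d := h.add_mul_sub_eq_commutator
  rw [hχ]
  refine ⟨h.commutator_mul_self, ?_, fun _ => h.commutator_smul_eq_self_iff h2,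
    fun _ => h.commutator_smul_eq_neg_iff h2⟩
  rw [h.commutator_eq_one_sub, two_mul, two_smul]
  rfl

/-- For a unit vector `ν`, the boundary map `χ = c̃(ν)c(ν)` satisfies `χ² = id`,
`χ = id − 2·w(ν)∘∂(ν)`, and its `±1`-eigenspaces are characterized by the absolute boundary
condition `i_ν ω = 0` and the relative boundary condition `ν ∧ ω = 0`, respectively. -/
theorem boundary_map_properties {E : Type*} [NormedAddCommGroup E] [InnerProductSpace ℝ E]
    (ν : E) (hν : ‖ν‖ = 1) :
    (chiOp ν ∘ₗ chiOp ν = LinearMap.id) ∧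
      (chiOp ν = LinearMap.id - (2 : ℝ) • (wedgeMul ν ∘ₗ interiorMul ν)) ∧
      (∀ ω : ExteriorAlgebra ℝ E, chiOp ν ω = ω ↔ interiorMul ν ω = 0) ∧
      (∀ ω : ExteriorAlgebra ℝ E, chiOp ν ω = -ω ↔ wedgeMul ν ω = 0) :=
  have : IsAddTorsionFree (ExteriorAlgebra ℝ E) := .of_isTorsionFree ℝ _
  boundary_map_properties_general (isFermionPair_wedgeMul_interiorMul hν)
    (.of_ne_zero two_ne_zero)
end
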